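/- arXiv:2510.11158 — 3 statements merged into one kernel-verified Lean document; each statement's English description precedes it below -/
import Mathlib

section
/- Fix y ∈ ℝ^d and real numbers α₁ ≤ α₂, and suppose that (L̂ U)(z,y) + b_x(z,y)U(z,y) + c_x(z,y) = 0 for every z ∈ [α₁, α₂]. For β ∈ ℝ define λ(y;β) := c(β,y) + U(β,y)b(β,y) + (1/2)σ(β,y)²U_x(β,y) + σ(β,y)Σ_i (ρζ)_i(y)U_{y_i}(β,y). Then λ(y;α₂) − λ(y;α₁) = −∫_{α₁}^{α₂} [ Σ_i η_i(y)U_{y_i}(z,y) + (1/2)Σ_{i,j} a_{ij}(y)U_{y_i y_j}(z,y) ] dz. -/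
open MeasureTheory

/-- Partial derivative in the first (scalar) variable. -/
noncomputable def pdx {d : ℕ} (f : ℝ × (Fin d → ℝ) → ℝ) (p : ℝ × (Fin d → ℝ)) : ℝ :=
  deriv (fun x => f (x, p.2)) p.1

/-- Partial derivative in the `i`-th coordinate of the second variable. -/
noncomputable def pdy {d : ℕ} (i : Fin d) (f : ℝ × (Fin d → ℝ) → ℝ) (p : ℝ × (Fin d → ℝ)) : ℝ :=
  deriv (fun t => f (p.1, Function.update p.2 i t)) (p.2 i)

/-- `(ρζ)_i(y) = ∑_j ρ_j ζ_{ij}(y)`. -/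
noncomputable def rzeta {d : ℕ} (ζ : (Fin d → ℝ) → Fin d → Fin d → ℝ) (ρ : Fin d → ℝ)
    (y : Fin d → ℝ) (i : Fin d) : ℝ := ∑ j, ρ j * ζ y i j

/-- `a(y) = ζ(y) ζ(y)ᵀ`. -/
noncomputable def amat {d : ℕ} (ζ : (Fin d → ℝ) → Fin d → Fin d → ℝ)
    (y : Fin d → ℝ) (i j : Fin d) : ℝ := ∑ k, ζ y i k * ζ y j k

/-- The generator `L̂` of the auxiliary process `(X̂, Ŷ)`, applied to `U`. -/
noncomputable def genHat {d : ℕ} (b σ' : ℝ × (Fin d → ℝ) → ℝ)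
    (η : (Fin d → ℝ) → Fin d → ℝ) (ζ : (Fin d → ℝ) → Fin d → Fin d → ℝ) (ρ : Fin d → ℝ)
    (U : ℝ × (Fin d → ℝ) → ℝ) (p : ℝ × (Fin d → ℝ)) : ℝ :=
  (b p + σ' p * pdx σ' p) * pdx U p
    + (1 / 2) * (σ' p) ^ 2 * pdx (pdx U) p
    + ∑ i, (η p.2 i + pdx σ' p * rzeta ζ ρ p.2 i) * pdy i U p
    + (1 / 2) * ∑ i, ∑ j, amat ζ p.2 i j * pdy i (pdy j U) p
    + σ' p * ∑ i, rzeta ζ ρ p.2 i * pdy i (pdx U) p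

/-- The generator `L` of the uncontrolled process `(X⁰, Y)`, applied to `V`. -/
noncomputable def gen {d : ℕ} (b σ' : ℝ × (Fin d → ℝ) → ℝ)
    (η : (Fin d → ℝ) → Fin d → ℝ) (ζ : (Fin d → ℝ) → Fin d → Fin d → ℝ) (ρ : Fin d → ℝ)
    (V : ℝ × (Fin d → ℝ) → ℝ) (p : ℝ × (Fin d → ℝ)) : ℝ :=
  b p * pdx V p
    + (1 / 2) * (σ' p) ^ 2 * pdx (pdx V) p
    + ∑ i, η p.2 i * pdy i V p
    + (1 / 2) * ∑ i, ∑ j, amat ζ p.2 i j * pdy i (pdy j V) p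
    + σ' p * ∑ i, rzeta ζ ρ p.2 i * pdy i (pdx V) p

/-!
Differentiate `λ(y; ·)`. By symmetry of the second derivative of `U`, every term of `L̂ U` that
involves an `x`-derivative of `σ` or `U` also occurs in `∂_β λ(y; β)`. What is left of
`L̂ U + b_x U + c_x` is the generator of `Y`, so
`∂_β λ(y; β) = (L̂ U + b_x U + c_x)(β, y) - ∑ i, η_i U_{y_i} - (1/2) ∑ i, ∑ j, a_{ij} U_{y_i y_j}`.
The first summand vanishes by the equation for `U`, and the fundamental theorem of calculus
concludes.
-/

section LineDeriv

open scoped Topology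

variable {𝕜 E F : Type*} [NontriviallyNormedField 𝕜] [NormedAddCommGroup E] [NormedSpace 𝕜 E]
  [NormedAddCommGroup F] [NormedSpace 𝕜 F] {f : E → F} {x : E}

theorem lineDeriv_eventuallyEq_fderiv_apply (hf : ContDiffAt 𝕜 1 f x) (v : E) :
    (fun p => lineDeriv 𝕜 f p v) =ᶠ[𝓝 x] fun p => fderiv 𝕜 f p v :=
  (hf.eventually (by simp)).mono fun _ hp => hp.differentiableAt_one.lineDeriv_eq_fderiv

theorem contDiffAt_lineDeriv {m n : WithTop ℕ∞} (hf : ContDiffAt 𝕜 n f x) (hmn : m + 1 ≤ n)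
    (v : E) : ContDiffAt 𝕜 m (fun p => lineDeriv 𝕜 f p v) x :=
  ((hf.fderiv_right hmn).clm_apply contDiffAt_const).congr_of_eventuallyEq
    (lineDeriv_eventuallyEq_fderiv_apply (hf.of_le (le_add_self.trans hmn)) v)

theorem lineDeriv_lineDeriv_eq_fderiv_fderiv (hf : ContDiffAt 𝕜 2 f x) (v w : E) :
    lineDeriv 𝕜 (fun p => lineDeriv 𝕜 f p v) x w = fderiv 𝕜 (fderiv 𝕜 f) x w v := by
  have hf' : DifferentiableAt 𝕜 (fderiv 𝕜 f) x :=
    (hf.fderiv_right (m := 1) one_add_one_eq_two.le).differentiableAt_one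
  rw [(lineDeriv_eventuallyEq_fderiv_apply (hf.of_le one_le_two) v).lineDeriv_eq,
    (hf'.clm_apply (differentiableAt_const v)).lineDeriv_eq_fderiv,
    fderiv_clm_apply hf' (differentiableAt_const v)]
  simp

theorem lineDeriv_lineDeriv_comm {n : WithTop ℕ∞} (hf : ContDiffAt 𝕜 n f x)
    (hn : minSmoothness 𝕜 2 ≤ n) (v w : E) :
    lineDeriv 𝕜 (fun p => lineDeriv 𝕜 f p v) x w =
      lineDeriv 𝕜 (fun p => lineDeriv 𝕜 f p w) x v := by
  have hf₂ : ContDiffAt 𝕜 2 f x := hf.of_le (le_minSmoothness.trans hn)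
  simpa only [lineDeriv_lineDeriv_eq_fderiv_fderiv hf₂] using hf.isSymmSndFDerivAt hn w v

end LineDeriv

theorem differentiableAt_comp_prodMk_left {𝕜 E F G : Type*} [NontriviallyNormedField 𝕜]
    [NormedAddCommGroup E] [NormedSpace 𝕜 E] [NormedAddCommGroup F] [NormedSpace 𝕜 F]
    [NormedAddCommGroup G] [NormedSpace 𝕜 G] {f : E × F → G} {x : E} {y : F}
    (hf : DifferentiableAt 𝕜 f (x, y)) : DifferentiableAt 𝕜 (fun x => f (x, y)) x := by
  fun_prop

section PartialDerivatives

variable {d : ℕ} {f : ℝ × (Fin d → ℝ) → ℝ} {p : ℝ × (Fin d → ℝ)}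

theorem pdx_eq_lineDeriv (f : ℝ × (Fin d → ℝ) → ℝ) :
    pdx f = fun p => lineDeriv ℝ f p (1, 0) := by
  funext ⟨x, y⟩
  simpa [pdx, lineDeriv] using (deriv_comp_const_add (fun s => f (s, y)) x 0).symm

theorem pdy_eq_lineDeriv (i : Fin d) (f : ℝ × (Fin d → ℝ) → ℝ) :
    pdy i f = fun p => lineDeriv ℝ f p (0, Pi.single i 1) := by
  funext ⟨x, y⟩
  have update_eq (t : ℝ) : Function.update y i (y i + t) = y + t • Pi.single i 1 := by
    ext j
    rcases eq_or_ne j i with rfl | hj <;> simp [*]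
  simpa [pdy, lineDeriv, update_eq] using
    (deriv_comp_const_add (fun s => f (x, Function.update y i s)) (y i) 0).symm

theorem contDiffAt_pdx {m n : WithTop ℕ∞} (hf : ContDiffAt ℝ n f p) (hmn : m + 1 ≤ n) :
    ContDiffAt ℝ m (pdx f) p := by
  simpa only [pdx_eq_lineDeriv] using contDiffAt_lineDeriv hf hmn (1, 0)

theorem contDiffAt_pdy {m n : WithTop ℕ∞} (i : Fin d) (hf : ContDiffAt ℝ n f p)
    (hmn : m + 1 ≤ n) : ContDiffAt ℝ m (pdy i f) p := by
  simpa only [pdy_eq_lineDeriv] using contDiffAt_lineDeriv hf hmn (0, Pi.single i 1)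

theorem pdx_pdy_comm (i : Fin d) (hf : ContDiffAt ℝ 2 f p) :
    pdx (pdy i f) p = pdy i (pdx f) p := by
  simpa only [pdx_eq_lineDeriv, pdy_eq_lineDeriv] using
    lineDeriv_lineDeriv_comm hf (by simp) (0, Pi.single i 1) (1, 0)

theorem hasDerivAt_pdx {z : ℝ} {y : Fin d → ℝ}
    (hf : DifferentiableAt ℝ (fun x => f (x, y)) z) :
    HasDerivAt (fun x => f (x, y)) (pdx f (z, y)) z :=
  hf.hasDerivAt

end PartialDerivatives

section ValueProfile

variable {d : ℕ} {b σ c U : ℝ × (Fin d → ℝ) → ℝ} {z : ℝ} {y : Fin d → ℝ}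

/-- The value profile `λ(y; β)`, as a function of the pair `(β, y)` of reference level and factor
value. -/
noncomputable def valueProfile (b σ c : ℝ × (Fin d → ℝ) → ℝ)
    (ζ : (Fin d → ℝ) → Fin d → Fin d → ℝ) (ρ : Fin d → ℝ) (U : ℝ × (Fin d → ℝ) → ℝ)
    (p : ℝ × (Fin d → ℝ)) : ℝ :=
  c p + U p * b p + (1 / 2) * (σ p) ^ 2 * pdx U p + σ p * ∑ i, rzeta ζ ρ p.2 i * pdy i U p

/-- The generator of the factor process `Y`, acting on `U` in the second variable only. -/
noncomputable def factorGen (η : (Fin d → ℝ) → Fin d → ℝ) (ζ : (Fin d → ℝ) → Fin d → Fin d → ℝ)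
    (U : ℝ × (Fin d → ℝ) → ℝ) (p : ℝ × (Fin d → ℝ)) : ℝ :=
  ∑ i, η p.2 i * pdy i U p + (1 / 2) * ∑ i, ∑ j, amat ζ p.2 i j * pdy i (pdy j U) p

theorem genHat_eq_add_factorGen (b σ : ℝ × (Fin d → ℝ) → ℝ) (η : (Fin d → ℝ) → Fin d → ℝ)
    (ζ : (Fin d → ℝ) → Fin d → Fin d → ℝ) (ρ : Fin d → ℝ) (U : ℝ × (Fin d → ℝ) → ℝ)
    (p : ℝ × (Fin d → ℝ)) :
    genHat b σ η ζ ρ U p =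
      (b p + σ p * pdx σ p) * pdx U p + (1 / 2) * (σ p) ^ 2 * pdx (pdx U) p
        + pdx σ p * ∑ i, rzeta ζ ρ p.2 i * pdy i U p
        + σ p * ∑ i, rzeta ζ ρ p.2 i * pdy i (pdx U) p
        + factorGen η ζ U p := by
  simp only [genHat, factorGen, add_mul, Finset.sum_add_distrib, mul_assoc, ← Finset.mul_sum]
  ring

theorem hasDerivAt_sum_rzeta_mul_pdy (ζ : (Fin d → ℝ) → Fin d → Fin d → ℝ) (ρ : Fin d → ℝ)
    (hU : ContDiffAt ℝ 2 U (z, y)) :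
    HasDerivAt (fun x => ∑ i, rzeta ζ ρ y i * pdy i U (x, y))
      (∑ i, rzeta ζ ρ y i * pdy i (pdx U) (z, y)) z := by
  refine HasDerivAt.fun_sum fun i _ => ?_
  rw [← pdx_pdy_comm i hU]
  have hUy : ContDiffAt ℝ 1 (pdy i U) (z, y) := contDiffAt_pdy i hU one_add_one_eq_two.le
  exact (hasDerivAt_pdx
    (differentiableAt_comp_prodMk_left hUy.differentiableAt_one)).const_mul _

theorem hasDerivAt_valueProfile (η : (Fin d → ℝ) → Fin d → ℝ)
    (ζ : (Fin d → ℝ) → Fin d → Fin d → ℝ) (ρ : Fin d → ℝ)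
    (hb : DifferentiableAt ℝ (fun x => b (x, y)) z)
    (hσ : DifferentiableAt ℝ (fun x => σ (x, y)) z)
    (hc : DifferentiableAt ℝ (fun x => c (x, y)) z)
    (hU : ContDiffAt ℝ 2 U (z, y)) :
    HasDerivAt (fun x => valueProfile b σ c ζ ρ U (x, y))
      (genHat b σ η ζ ρ U (z, y) + pdx b (z, y) * U (z, y) + pdx c (z, y)
        - factorGen η ζ U (z, y)) z := by
  have hb' := hasDerivAt_pdx hb
  have hσ' := hasDerivAt_pdx hσ
  have hc' := hasDerivAt_pdx hc
  have hU' := hasDerivAt_pdx (differentiableAt_comp_prodMk_left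
    (hU.differentiableAt two_ne_zero))
  have hUx := hasDerivAt_pdx (differentiableAt_comp_prodMk_left
    (contDiffAt_pdx hU one_add_one_eq_two.le).differentiableAt_one)
  have hUy := hasDerivAt_sum_rzeta_mul_pdy ζ ρ hU
  refine (((hc'.add (hU'.mul hb')).add (((hσ'.pow 2).const_mul (1 / 2)).mul hUx)).add
    (hσ'.mul hUy)).congr_deriv ?_
  rw [genHat_eq_add_factorGen]
  simp only [Pi.pow_apply]
  ring

theorem continuousAt_factorGen (η : (Fin d → ℝ) → Fin d → ℝ)
    (ζ : (Fin d → ℝ) → Fin d → Fin d → ℝ) (hU : ContDiffAt ℝ 2 U (z, y)) :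
    ContinuousAt (fun x => factorGen η ζ U (x, y)) z := by
  have hslice : ContinuousAt (fun x : ℝ => (x, y)) z := by fun_prop
  have hUy (i : Fin d) : ContDiffAt ℝ 1 (pdy i U) (z, y) :=
    contDiffAt_pdy i hU one_add_one_eq_two.le
  have hUyy (i j : Fin d) : ContDiffAt ℝ 0 (pdy i (pdy j U)) (z, y) :=
    contDiffAt_pdy i (hUy j) (zero_add 1).le
  have hdrift : ContinuousAt (fun x => ∑ i, η y i * pdy i U (x, y)) z :=
    tendsto_finsetSum _ fun i _ =>
      ((hUy i).continuousAt.comp_of_eq hslice rfl).const_mul (η y i)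
  have hdiffusion :
      ContinuousAt (fun x => ∑ i, ∑ j, amat ζ y i j * pdy i (pdy j U) (x, y)) z :=
    tendsto_finsetSum _ fun i _ => tendsto_finsetSum _ fun j _ =>
      ((hUyy i j).continuousAt.comp_of_eq hslice rfl).const_mul (amat ζ y i j)
  exact hdrift.add (hdiffusion.const_mul (1 / 2))

end ValueProfile

theorem statement2_general {d : ℕ} {b σ c U : ℝ × (Fin d → ℝ) → ℝ}
    {η : (Fin d → ℝ) → Fin d → ℝ} {ζ : (Fin d → ℝ) → Fin d → Fin d → ℝ} {ρ : Fin d → ℝ}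
    {y : Fin d → ℝ} {α₁ α₂ : ℝ}
    (hb : ∀ z ∈ Set.uIcc α₁ α₂, DifferentiableAt ℝ (fun x => b (x, y)) z)
    (hσ : ∀ z ∈ Set.uIcc α₁ α₂, DifferentiableAt ℝ (fun x => σ (x, y)) z)
    (hc : ∀ z ∈ Set.uIcc α₁ α₂, DifferentiableAt ℝ (fun x => c (x, y)) z)
    (hU : ∀ z ∈ Set.uIcc α₁ α₂, ContDiffAt ℝ 2 U (z, y))
    (hPDE : ∀ z ∈ Set.uIcc α₁ α₂,
      genHat b σ η ζ ρ U (z, y) + pdx b (z, y) * U (z, y) + pdx c (z, y) = 0) :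
    valueProfile b σ c ζ ρ U (α₂, y) - valueProfile b σ c ζ ρ U (α₁, y)
      = -∫ z in α₁..α₂, factorGen η ζ U (z, y) := by
  have hderiv : ∀ z ∈ Set.uIcc α₁ α₂,
      HasDerivAt (fun x => valueProfile b σ c ζ ρ U (x, y)) (-factorGen η ζ U (z, y)) z :=
    fun z hz => by
      simpa only [hPDE z hz, zero_sub] using
        hasDerivAt_valueProfile η ζ ρ (hb z hz) (hσ z hz) (hc z hz) (hU z hz)
  have hcont : ContinuousOn (fun z => factorGen η ζ U (z, y)) (Set.uIcc α₁ α₂) :=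
    fun z hz => (continuousAt_factorGen η ζ (hU z hz)).continuousWithinAt
  rw [← intervalIntegral.integral_neg]
  exact (intervalIntegral.integral_eq_sub_of_hasDerivAt hderiv
    hcont.neg.intervalIntegrable).symm

theorem statement2 {d : ℕ} (hd : 1 ≤ d)
    (b σ c : ℝ × (Fin d → ℝ) → ℝ)
    (hb : ContDiff ℝ 1 b) (hσ : ContDiff ℝ 1 σ) (hc : ContDiff ℝ 1 c)
    (η : (Fin d → ℝ) → Fin d → ℝ) (ζ : (Fin d → ℝ) → Fin d → Fin d → ℝ) (ρ : Fin d → ℝ)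
    (U : ℝ × (Fin d → ℝ) → ℝ) (hU : ContDiff ℝ 2 U)
    (y : Fin d → ℝ) (α₁ α₂ : ℝ) (hα : α₁ ≤ α₂)
    (hPDE : ∀ z ∈ Set.Icc α₁ α₂,
      genHat b σ η ζ ρ U (z, y) + pdx b (z, y) * U (z, y) + pdx c (z, y) = 0)
    (lam : ℝ → ℝ)
    (hlam : ∀ β : ℝ, lam β = c (β, y) + U (β, y) * b (β, y)
        + (1 / 2) * (σ (β, y)) ^ 2 * pdx U (β, y)
        + σ (β, y) * ∑ i, rzeta ζ ρ y i * pdy i U (β, y)) :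
    lam α₂ - lam α₁
      = -∫ z in α₁..α₂,
          (∑ i, η y i * pdy i U (z, y)
            + (1 / 2) * ∑ i, ∑ j, amat ζ y i j * pdy i (pdy j U) (z, y)) := by
  obtain rfl : lam = fun β => valueProfile b σ c ζ ρ U (β, y) := funext hlam
  exact statement2_general
    (fun _ _ => differentiableAt_comp_prodMk_left hb.contDiffAt.differentiableAt_one)
    (fun _ _ => differentiableAt_comp_prodMk_left hσ.contDiffAt.differentiableAt_one)
    (fun _ _ => differentiableAt_comp_prodMk_left hc.contDiffAt.differentiableAt_one)
    (fun _ _ => hU.contDiffAt) (by rwa [Set.uIcc_of_le hα])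
end

section
/- For every (x,z) ∈ ℝ² there exists a natural number n ≥ 0 such that the n-th derivative at the point x of the function x′ ↦ q(x′, z) is nonzero (n = 0 meaning q(x,z) ≠ 0). -/
/-- Partial derivative in the first variable. -/
noncomputable def pd1 (f : ℝ × ℝ → ℝ) (p : ℝ × ℝ) : ℝ := deriv (fun x => f (x, p.2)) p.1

/-- Partial derivative in the second variable. -/
noncomputable def pd2 (f : ℝ × ℝ → ℝ) (p : ℝ × ℝ) : ℝ := deriv (fun y => f (p.1, y)) p.2

/-- `E(x,z) = exp((γ/σ)(z+x)) / (1 + exp((γ/σ)(z+x)))`. -/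
noncomputable def Efun (σ γ : ℝ) (x z : ℝ) : ℝ :=
  Real.exp ((γ / σ) * (z + x)) / (1 + Real.exp ((γ / σ) * (z + x)))

/-- `m(y) = m₂ + (m₁ - m₂) y`. -/
noncomputable def mfun (m₁ m₂ : ℝ) (y : ℝ) : ℝ := m₂ + (m₁ - m₂) * y

/-- `μ(x,z) = m(E(x,z)) - δ x`. -/
noncomputable def mufun (σ γ δ m₁ m₂ : ℝ) (x z : ℝ) : ℝ :=
  mfun m₁ m₂ (Efun σ γ x z) - δ * x

/-- The drift `q(x,z)` of the finite-variation coordinate `Z`. -/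
noncomputable def qfun (σ γ δ lam₁ lam₂ m₁ m₂ : ℝ) (x z : ℝ) : ℝ :=
  σ * γ * (Efun σ γ x z - 1 / 2)
    + (σ / γ) * (1 + Real.exp (-(γ / σ) * (z + x)))
      * (lam₂ - lam₁ * Real.exp ((γ / σ) * (z + x)))
    - mfun m₁ m₂ (Efun σ γ x z) + δ * x

/-- `z(x,y) = (σ/γ) log(y/(1-y)) - x`. -/
noncomputable def zfun (σ γ : ℝ) (x y : ℝ) : ℝ := (σ / γ) * Real.log (y / (1 - y)) - x

/-!
If `q(·, z)` and all its derivatives vanish at one point, analyticity forces `q(·, z)` to vanish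
identically. In the variable `t = (γ/σ)(z + x)` the section `q(·, z)` is a linear combination of
`exp t`, `exp (-t)`, `t`, the logistic function `1/(1 + exp (-t))` and `1`. These functions are
linearly independent: `exp t` dominates the others at `+∞`, by reflection `exp (-t)` dominates them
at `-∞`, `t` dominates the two bounded ones, and the logistic function is not constant. Hence all
five coefficients vanish, which happens only when `λ₁ = λ₂ = δ = 0`, `m₁ = σγ/2` and `m₂ = -σγ/2`.
-/

open Filter Asymptotics

section Analytic

variable {𝕜 E : Type*} [NontriviallyNormedField 𝕜] [CharZero 𝕜] [NormedAddCommGroup E]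
  [NormedSpace 𝕜 E] [CompleteSpace E] {f : 𝕜 → E} {x : 𝕜}

theorem analyticOrderAt_eq_top_of_iteratedDeriv_eq_zero (hf : AnalyticAt 𝕜 f x)
    (h : ∀ n, iteratedDeriv n f x = 0) : analyticOrderAt f x = ⊤ :=
  ENat.eq_top_iff_forall_ge.2 fun _ ↦
    (natCast_le_analyticOrderAt_iff_iteratedDeriv_eq_zero hf).2 fun i _ ↦ h i

theorem eqOn_zero_of_preconnected_of_iteratedDeriv_eq_zero {U : Set 𝕜}
    (hf : AnalyticOnNhd 𝕜 f U) (hU : IsPreconnected U) (hx : x ∈ U)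
    (h : ∀ n, iteratedDeriv n f x = 0) : Set.EqOn f 0 U :=
  hf.eqOn_zero_of_preconnected_of_eventuallyEq_zero hU hx <|
    analyticOrderAt_eq_top.1 <| analyticOrderAt_eq_top_of_iteratedDeriv_eq_zero (hf x hx) h

end Analytic

section Asymptotics

theorem eq_zero_of_mul_add_eq_zero_of_isLittleO {α 𝕜 : Type*} [NormedDivisionRing 𝕜] {l : Filter α}
    {f g : α → 𝕜} {a : 𝕜} (hf : ∃ᶠ t in l, f t ≠ 0) (hg : g =o[l] f)
    (h : ∀ t, a * f t + g t = 0) : a = 0 := by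
  by_contra ha
  have h_neg : (fun t ↦ a * f t) = fun t ↦ -g t := funext fun t ↦ eq_neg_of_add_eq_zero_left (h t)
  exact isLittleO_irrefl hf ((isLittleO_const_mul_left_iff ha).1 (h_neg ▸ hg.neg_left))

theorem isLittleO_id_exp_atTop : (fun t : ℝ ↦ t) =o[atTop] Real.exp := by
  simpa only [pow_one] using Real.isLittleO_pow_exp_atTop (n := 1)

theorem isLittleO_one_exp_atTop : (fun _ ↦ 1 : ℝ → ℝ) =o[atTop] Real.exp := by
  simpa only [pow_zero] using Real.isLittleO_pow_exp_atTop (n := 0)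

theorem isBigO_exp_neg_one_atTop : (fun t : ℝ ↦ Real.exp (-t)) =O[atTop] (fun _ ↦ 1 : ℝ → ℝ) :=
  Real.tendsto_exp_neg_atTop_nhds_zero.isBigO_one ℝ

theorem isBigO_sigmoid_one (l : Filter ℝ) : Real.sigmoid =O[l] (fun _ ↦ 1 : ℝ → ℝ) :=
  .of_norm_le fun t ↦ by
    simpa only [Real.norm_of_nonneg (Real.sigmoid_nonneg t)] using Real.sigmoid_le_one t

theorem exp_coeff_eq_zero_of_isBigO_one {a b c : ℝ} {g : ℝ → ℝ}
    (hg : g =O[atTop] (fun _ ↦ 1 : ℝ → ℝ))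
    (h : ∀ t, a * Real.exp t + b * Real.exp (-t) + c * t + g t = 0) : a = 0 := by
  have h_bounded : (fun t ↦ b * Real.exp (-t) + g t) =O[atTop] (fun _ ↦ 1 : ℝ → ℝ) :=
    (isBigO_exp_neg_one_atTop.const_mul_left b).add hg
  refine eq_zero_of_mul_add_eq_zero_of_isLittleO (.of_forall Real.exp_ne_zero)
    ((isLittleO_id_exp_atTop.const_mul_left c).add
      (h_bounded.trans_isLittleO isLittleO_one_exp_atTop)) fun t ↦ ?_
  linear_combination h t

theorem exp_neg_coeff_eq_zero_of_isBigO_one {a b c : ℝ} {g : ℝ → ℝ}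
    (hg : g =O[atBot] (fun _ ↦ 1 : ℝ → ℝ))
    (h : ∀ t, a * Real.exp t + b * Real.exp (-t) + c * t + g t = 0) : b = 0 := by
  refine exp_coeff_eq_zero_of_isBigO_one (b := a) (c := -c)
    (hg.comp_tendsto tendsto_neg_atTop_atBot) fun t ↦ ?_
  have h_reflected := h (-t)
  rw [neg_neg] at h_reflected
  rw [Function.comp_apply]
  linear_combination h_reflected

theorem id_coeff_eq_zero_of_isBigO_one {c : ℝ} {g : ℝ → ℝ}
    (hg : g =O[atTop] (fun _ ↦ 1 : ℝ → ℝ)) (h : ∀ t, c * t + g t = 0) : c = 0 :=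
  eq_zero_of_mul_add_eq_zero_of_isLittleO (eventually_ne_atTop 0).frequently
    (hg.trans_isLittleO (isLittleO_const_id_atTop 1)) h

theorem eq_zero_of_mul_add_const_eq_zero {α R : Type*} [Ring R] [NoZeroDivisors R] {f : α → R}
    {d e : R} {s t : α} (hst : f s ≠ f t) (h : ∀ u, d * f u + e = 0) : d = 0 := by
  have h_diff : d * (f s - f t) = 0 := by
    rw [mul_sub, ← add_sub_add_right_eq_sub, h s, h t, sub_zero]
  exact (mul_eq_zero.1 h_diff).resolve_right (sub_ne_zero.2 hst)

theorem linearIndependent_exp_exp_neg_id_sigmoid_one :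
    LinearIndependent ℝ ![Real.exp, fun t ↦ Real.exp (-t), id, Real.sigmoid, 1] := by
  refine Fintype.linearIndependent_iff.2 fun c hc ↦ ?_
  have h_bounded (l : Filter ℝ) :
      (fun t ↦ c 3 * Real.sigmoid t + c 4) =O[l] (fun _ ↦ 1 : ℝ → ℝ) :=
    ((isBigO_sigmoid_one l).const_mul_left (c 3)).add (isBigO_const_const (c 4) one_ne_zero l)
  have h_exp : ∀ t, c 0 * Real.exp t + c 1 * Real.exp (-t) + c 2 * t
      + (c 3 * Real.sigmoid t + c 4) = 0 := by
    simpa [Fin.sum_univ_five, add_assoc] using congrFun hc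
  have h0 : c 0 = 0 := exp_coeff_eq_zero_of_isBigO_one (h_bounded atTop) h_exp
  have h1 : c 1 = 0 := exp_neg_coeff_eq_zero_of_isBigO_one (h_bounded atBot) h_exp
  have h_id : ∀ t, c 2 * t + (c 3 * Real.sigmoid t + c 4) = 0 := by
    simpa only [h0, h1, zero_mul, zero_add] using h_exp
  have h2 : c 2 = 0 := id_coeff_eq_zero_of_isBigO_one (h_bounded atTop) h_id
  have h_sigmoid : ∀ t, c 3 * Real.sigmoid t + c 4 = 0 := by
    simpa only [h2, zero_mul, zero_add] using h_id
  have h3 : c 3 = 0 :=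
    eq_zero_of_mul_add_const_eq_zero (Real.sigmoid_injective.ne zero_ne_one) h_sigmoid
  have h4 : c 4 = 0 := by simpa only [h3, zero_mul, zero_add] using h_sigmoid 0
  simp only [Fin.forall_fin_succ, IsEmpty.forall_iff, and_true]
  exact ⟨h0, h1, h2, h3, h4⟩

end Asymptotics

section Drift

variable {σ γ δ lam₁ lam₂ m₁ m₂ : ℝ}

theorem Efun_eq_sigmoid (σ γ x z : ℝ) : Efun σ γ x z = Real.sigmoid (γ / σ * (z + x)) := by
  rw [Efun, Real.sigmoid_def, Real.exp_neg]
  field_simp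
  ring

theorem analyticOnNhd_qfun (σ γ δ lam₁ lam₂ m₁ m₂ z : ℝ) :
    AnalyticOnNhd ℝ (fun x ↦ qfun σ γ δ lam₁ lam₂ m₁ m₂ x z) Set.univ := by
  intro x _
  simp only [qfun, mfun, Efun_eq_sigmoid]
  fun_prop

theorem qfun_div_mul_sub (hσ : σ ≠ 0) (hγ : γ ≠ 0) (t z : ℝ) :
    qfun σ γ δ lam₁ lam₂ m₁ m₂ (σ / γ * t - z) z =
      -(σ / γ * lam₁) * Real.exp t + σ / γ * lam₂ * Real.exp (-t) + σ / γ * δ * t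
        + (σ * γ - (m₁ - m₂)) * Real.sigmoid t
        + (σ / γ * (lam₂ - lam₁) - σ * γ / 2 - m₂ - δ * z) := by
  have h_arg : γ / σ * (z + (σ / γ * t - z)) = t := by field_simp; ring
  have h_exp : Real.exp (-t) * Real.exp t = 1 := by
    rw [← Real.exp_add, neg_add_cancel, Real.exp_zero]
  simp only [qfun, mfun, Efun_eq_sigmoid, neg_mul, h_arg]
  linear_combination -(σ / γ * lam₁) * h_exp

theorem forall_qfun_eq_zero_iff (hσ : σ ≠ 0) (hγ : γ ≠ 0) (z : ℝ) :
    (∀ x, qfun σ γ δ lam₁ lam₂ m₁ m₂ x z = 0) ↔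
      lam₁ = 0 ∧ lam₂ = 0 ∧ δ = 0 ∧ m₁ = σ * γ / 2 ∧ m₂ = -(σ * γ / 2) := by
  constructor
  · intro h
    have h_coeff := Fintype.linearIndependent_iff.1 linearIndependent_exp_exp_neg_id_sigmoid_one
      ![-(σ / γ * lam₁), σ / γ * lam₂, σ / γ * δ, σ * γ - (m₁ - m₂),
        σ / γ * (lam₂ - lam₁) - σ * γ / 2 - m₂ - δ * z] <| funext fun t ↦ by
          simpa [Fin.sum_univ_five] using (qfun_div_mul_sub hσ hγ t z).symm.trans (h _)
    have hlam₁ : lam₁ = 0 := by simpa [hσ, hγ] using h_coeff 0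
    have hlam₂ : lam₂ = 0 := by simpa [hσ, hγ] using h_coeff 1
    have hδ : δ = 0 := by simpa [hσ, hγ] using h_coeff 2
    have hm : σ * γ - (m₁ - m₂) = 0 := h_coeff 3
    have hm₂ : -(σ * γ / 2) - m₂ = 0 := by simpa [hlam₁, hlam₂, hδ] using h_coeff 4
    exact ⟨hlam₁, hlam₂, hδ, by linarith, by linarith⟩
  · rintro ⟨rfl, rfl, rfl, rfl, rfl⟩ x
    simp only [qfun, mfun]
    ring

theorem statement8_general (hσ : σ ≠ 0) (hγ : γ ≠ 0) (x z : ℝ) :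
    (∃ n : ℕ, iteratedDeriv n (fun x' ↦ qfun σ γ δ lam₁ lam₂ m₁ m₂ x' z) x ≠ 0) ↔
      ¬(lam₁ = 0 ∧ lam₂ = 0 ∧ δ = 0 ∧ m₁ = σ * γ / 2 ∧ m₂ = -(σ * γ / 2)) := by
  rw [← not_forall_not, ← forall_qfun_eq_zero_iff hσ hγ z]
  simp only [not_not]
  refine not_congr ⟨fun h x' ↦ ?_, fun h n ↦ ?_⟩
  · exact eqOn_zero_of_preconnected_of_iteratedDeriv_eq_zero
      (analyticOnNhd_qfun σ γ δ lam₁ lam₂ m₁ m₂ z) isPreconnected_univ (Set.mem_univ x) h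
      (Set.mem_univ x')
  · simp only [h, iteratedDeriv_const, ite_self]

end Drift

theorem statement8 (σ γ δ lam₁ lam₂ m₁ m₂ : ℝ)
    (hσ : 0 < σ) (hγ : 0 < γ) (hδ : 0 < δ) (hlam₁ : 0 < lam₁) (hlam₂ : 0 < lam₂)
    (hm : m₂ < m₁) :
    ∀ x z : ℝ, ∃ n : ℕ,
      iteratedDeriv n (fun x' => qfun σ γ δ lam₁ lam₂ m₁ m₂ x' z) x ≠ 0 :=
  fun x z ↦ (statement8_general hσ.ne' hγ.ne' x z).2 fun h ↦ hδ.ne' h.2.2.1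
end

section
/- Let σ > 0, γ > 0, α ∈ ℝ, and let Û : ℝ² → ℝ be twice continuously differentiable, with partial derivatives Û_x, Û_z, Û_{xx}. Define z(x,y) := (σ/γ)·log(y/(1−y)) − x for (x,y) ∈ ℝ × (0,1) and V(x,y) := ∫_α^x Û(x′, z(x′,y)) dx′. Then for all (x,y) ∈ ℝ × (0,1): (i) V_x(x,y) = Û(x, z(x,y)); (ii) V_{xx}(x,y) = Û_x(x, z(x,y)) − Û_z(x, z(x,y)); (iii) V_{xy}(x,y) = Û_z(x, z(x,y)) · (σ/γ) · (1/(y(1−y))); (iv) V_y(x,y) = (σ/γ)·(1/(y(1−y))) · ∫_α^x Û_z(x′, z(x′,y)) dx′; (v) V_{yy}(x,y) = (σ/γ)·((2y−1)/(y²(1−y)²)) · ∫_α^x Û_z(x′, z(x′,y)) dx′ + (σ²/γ²)·(1/(y²(1−y)²)) · ( Û_z(α, z(α,y)) − Û_z(x, z(x,y)) ) + (σ²/γ²)·(1/(y²(1−y)²)) · ( Û_x(α, z(α,y)) − Û_x(x, z(x,y)) + ∫_α^x Û_{xx}(x′, z(x′,y)) dx′ ). -/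
/-!
For fixed `y` the integrand of `V` lives on an antidiagonal `{(t, c - t)}` with `c = w y` and
`w y = (σ/γ) log (y / (1 - y))`, so the derivatives of `V` in `y` follow from the Leibniz rule in
`c` and the chain rule, which produce `∫ Û_zz` in the second derivative. Along an antidiagonal
`d/dt = ∂₁ - ∂₂`; applying the fundamental theorem of calculus to `Û_z` trades `Û_zz` for `Û_xz`,
and applying it once more, to `Û_x`, trades `Û_xz` for `Û_xx`.
-/

section LeibnizRule

variable {𝕜 E : Type*} [RCLike 𝕜] [NormedAddCommGroup E] [NormedSpace ℝ E] [NormedSpace 𝕜 E]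

theorem hasDerivAt_intervalIntegral_of_continuous_deriv {μ : MeasureTheory.Measure ℝ}
    [MeasureTheory.IsLocallyFiniteMeasure μ] {F F' : 𝕜 → ℝ → E} (hF : ∀ c, Continuous (F c))
    (hF' : Continuous (Function.uncurry F')) (hderiv : ∀ c t, HasDerivAt (F · t) (F' c t) c)
    (a b : ℝ) (c : 𝕜) :
    HasDerivAt (fun c => ∫ t in a..b, F c t ∂μ) (∫ t in a..b, F' c t ∂μ) c := by
  obtain ⟨M, hM⟩ := ((isCompact_closedBall c 1).prod
    (isCompact_uIcc (a := a) (b := b))).exists_bound_of_continuousOn hF'.continuousOn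
  have hbound : ∀ t ∈ Set.uIoc a b, ∀ c' ∈ Metric.ball c 1, ‖F' c' t‖ ≤ M := fun t ht c' hc' =>
    hM (c', t) ⟨Metric.ball_subset_closedBall hc', Set.uIoc_subset_uIcc ht⟩
  exact (intervalIntegral.hasDerivAt_integral_of_dominated_loc_of_deriv_le
    (Metric.ball_mem_nhds c one_pos)
    (.of_forall fun c => (hF c).aestronglyMeasurable)
    ((hF c).intervalIntegrable a b)
    (hF'.uncurry_left c).aestronglyMeasurable
    (.of_forall hbound)
    intervalIntegrable_const
    (.of_forall fun t _ c' _ => hderiv c' t)).2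

end LeibnizRule

section PartialDerivatives

variable {f : ℝ × ℝ → ℝ} {p : ℝ × ℝ}

theorem pd1_eq_fderiv (hf : DifferentiableAt ℝ f p) : pd1 f p = fderiv ℝ f p (1, 0) :=
  (hf.hasFDerivAt.comp_hasDerivAt p.1
    ((hasDerivAt_id p.1).prodMk (hasDerivAt_const p.1 p.2))).deriv

theorem pd2_eq_fderiv (hf : DifferentiableAt ℝ f p) : pd2 f p = fderiv ℝ f p (0, 1) :=
  (hf.hasFDerivAt.comp_hasDerivAt p.2
    ((hasDerivAt_const p.2 p.1).prodMk (hasDerivAt_id p.2))).deriv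

theorem fderiv_apply_eq_pd (hf : DifferentiableAt ℝ f p) (u v : ℝ) :
    fderiv ℝ f p (u, v) = pd1 f p * u + pd2 f p * v := by
  have huv : ((u, v) : ℝ × ℝ) = u • (1, 0) + v • (0, 1) := by simp
  rw [huv, map_add, map_smul, map_smul, pd1_eq_fderiv hf, pd2_eq_fderiv hf, smul_eq_mul,
    smul_eq_mul, mul_comm u, mul_comm v]

theorem hasDerivAt_comp_prodMk {a b : ℝ → ℝ} {a' b' t : ℝ}
    (hf : DifferentiableAt ℝ f (a t, b t)) (ha : HasDerivAt a a' t) (hb : HasDerivAt b b' t) :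
    HasDerivAt (fun s => f (a s, b s)) (pd1 f (a t, b t) * a' + pd2 f (a t, b t) * b') t := by
  rw [← fderiv_apply_eq_pd hf]
  exact hf.hasFDerivAt.comp_hasDerivAt t (ha.prodMk hb)

theorem contDiff_pd1 {n m : WithTop ℕ∞} (hf : ContDiff ℝ n f) (hmn : m + 1 ≤ n) :
    ContDiff ℝ m (pd1 f) := by
  have hdiff : Differentiable ℝ f := (hf.of_le (le_add_self.trans hmn)).differentiable one_ne_zero
  rw [show pd1 f = _ from funext fun p => pd1_eq_fderiv (hdiff p)]
  exact (hf.fderiv_right hmn).clm_apply contDiff_const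

theorem contDiff_pd2 {n m : WithTop ℕ∞} (hf : ContDiff ℝ n f) (hmn : m + 1 ≤ n) :
    ContDiff ℝ m (pd2 f) := by
  have hdiff : Differentiable ℝ f := (hf.of_le (le_add_self.trans hmn)).differentiable one_ne_zero
  rw [show pd2 f = _ from funext fun p => pd2_eq_fderiv (hdiff p)]
  exact (hf.fderiv_right hmn).clm_apply contDiff_const

theorem continuous_pd1 (hf : ContDiff ℝ 1 f) : Continuous (pd1 f) :=
  (contDiff_pd1 (m := 0) hf (by simp)).continuous

theorem continuous_pd2 (hf : ContDiff ℝ 1 f) : Continuous (pd2 f) :=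
  (contDiff_pd2 (m := 0) hf (by simp)).continuous

theorem pd1_pd2_comm (hf : ContDiff ℝ 2 f) : pd1 (pd2 f) = pd2 (pd1 f) := by
  funext p
  have hdiff : Differentiable ℝ f := hf.differentiable two_ne_zero
  have hdiff1 : Differentiable ℝ (pd1 f) :=
    (contDiff_pd1 (m := 1) hf one_add_one_eq_two.le).differentiable one_ne_zero
  have hdiff2 : Differentiable ℝ (pd2 f) :=
    (contDiff_pd2 (m := 1) hf one_add_one_eq_two.le).differentiable one_ne_zero
  have hfderiv : DifferentiableAt ℝ (fderiv ℝ f) p :=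
    (hf.fderiv_right (m := 1) one_add_one_eq_two.le).differentiable one_ne_zero p
  have hsymm : IsSymmSndFDerivAt ℝ f p := hf.contDiffAt.isSymmSndFDerivAt (by simp)
  rw [pd1_eq_fderiv (hdiff2 p), pd2_eq_fderiv (hdiff1 p),
    show pd1 f = _ from funext fun q => pd1_eq_fderiv (hdiff q),
    show pd2 f = _ from funext fun q => pd2_eq_fderiv (hdiff q),
    fderiv_clm_apply hfderiv (differentiableAt_const _),
    fderiv_clm_apply hfderiv (differentiableAt_const _)]
  simpa using hsymm (1, 0) (0, 1)

end PartialDerivatives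

section Antidiagonal

variable {f : ℝ × ℝ → ℝ}

theorem hasDerivAt_antidiagonal {c t : ℝ} (hf : DifferentiableAt ℝ f (t, c - t)) :
    HasDerivAt (fun t => f (t, c - t)) (pd1 f (t, c - t) - pd2 f (t, c - t)) t :=
  (hasDerivAt_comp_prodMk hf (hasDerivAt_id t) ((hasDerivAt_id t).const_sub c)).congr_deriv
    (by simp only [id_eq]; ring)

theorem hasDerivAt_integral_antidiagonal (hf : ContDiff ℝ 1 f) (a b c : ℝ) :
    HasDerivAt (fun c => ∫ t in a..b, f (t, c - t)) (∫ t in a..b, pd2 f (t, c - t)) c := by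
  have hcont : Continuous f := hf.continuous
  have hcont2 : Continuous (pd2 f) := continuous_pd2 hf
  refine hasDerivAt_intervalIntegral_of_continuous_deriv (F := fun c t => f (t, c - t))
    (F' := fun c t => pd2 f (t, c - t)) (fun c => by fun_prop) (by fun_prop) (fun c t => ?_) a b c
  simpa using hasDerivAt_comp_prodMk (hf.differentiable one_ne_zero _) (hasDerivAt_const c t)
    ((hasDerivAt_id c).sub_const t)

theorem integral_pd2_antidiagonal (hf : ContDiff ℝ 1 f) (a b c : ℝ) :
    ∫ t in a..b, pd2 f (t, c - t)
      = f (a, c - a) - f (b, c - b) + ∫ t in a..b, pd1 f (t, c - t) := by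
  have hcont1 : Continuous (pd1 f) := continuous_pd1 hf
  have hcont2 : Continuous (pd2 f) := continuous_pd2 hf
  have hint1 : IntervalIntegrable (fun t => pd1 f (t, c - t)) MeasureTheory.volume a b :=
    Continuous.intervalIntegrable (by fun_prop) a b
  have hint2 : IntervalIntegrable (fun t => pd2 f (t, c - t)) MeasureTheory.volume a b :=
    Continuous.intervalIntegrable (by fun_prop) a b
  have hftc := intervalIntegral.integral_eq_sub_of_hasDerivAt
    (fun t _ => hasDerivAt_antidiagonal (hf.differentiable one_ne_zero (t, c - t)))
    (hint1.sub hint2)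
  rw [intervalIntegral.integral_sub hint1 hint2] at hftc
  linarith

theorem integral_pd2_pd2_antidiagonal (hf : ContDiff ℝ 2 f) (a b c : ℝ) :
    ∫ t in a..b, pd2 (pd2 f) (t, c - t)
      = pd2 f (a, c - a) - pd2 f (b, c - b)
        + (pd1 f (a, c - a) - pd1 f (b, c - b) + ∫ t in a..b, pd1 (pd1 f) (t, c - t)) := by
  rw [integral_pd2_antidiagonal (contDiff_pd2 hf one_add_one_eq_two.le), pd1_pd2_comm hf,
    integral_pd2_antidiagonal (contDiff_pd1 hf one_add_one_eq_two.le)]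

end Antidiagonal

/-- The pseudo-potential `V (x, y) = ∫ t in α..x, f (t, w y - t)` of a value function `f`, for the
change of variables `z = w y - x`. In the inventory model `w y = (σ/γ) log (y / (1 - y))`. -/
noncomputable def pseudoPotential (f : ℝ × ℝ → ℝ) (w : ℝ → ℝ) (α : ℝ) (p : ℝ × ℝ) : ℝ :=
  ∫ t in α..p.1, f (t, w p.2 - t)

section PseudoPotential

variable {f : ℝ × ℝ → ℝ} {w w' : ℝ → ℝ} {y w₁ w₂ : ℝ}

theorem pd1_pseudoPotential (hf : Continuous f) (w : ℝ → ℝ) (α : ℝ) :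
    pd1 (pseudoPotential f w α) = fun p => f (p.1, w p.2 - p.1) := by
  funext p
  have hcont : Continuous fun t => f (t, w p.2 - t) := by fun_prop
  exact (hcont.integral_hasStrictDerivAt α p.1).hasDerivAt.deriv

theorem pd1_pd1_pseudoPotential (hf : Differentiable ℝ f) (w : ℝ → ℝ) (α x y : ℝ) :
    pd1 (pd1 (pseudoPotential f w α)) (x, y) = pd1 f (x, w y - x) - pd2 f (x, w y - x) := by
  rw [pd1_pseudoPotential hf.continuous]
  exact (hasDerivAt_antidiagonal (hf (x, w y - x))).deriv

theorem pd2_pd1_pseudoPotential (hf : Differentiable ℝ f) (hw : HasDerivAt w w₁ y) (α x : ℝ) :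
    pd2 (pd1 (pseudoPotential f w α)) (x, y) = pd2 f (x, w y - x) * w₁ := by
  rw [pd1_pseudoPotential hf.continuous]
  simpa [pd2] using (hasDerivAt_comp_prodMk (hf _) (hasDerivAt_const y x) (hw.sub_const x)).deriv

theorem hasDerivAt_pseudoPotential_snd (hf : ContDiff ℝ 1 f) (hw : HasDerivAt w w₁ y) (α x : ℝ) :
    HasDerivAt (fun y => pseudoPotential f w α (x, y)) (w₁ * pseudoPotential (pd2 f) w α (x, y))
      y := by
  rw [mul_comm]
  exact (hasDerivAt_integral_antidiagonal hf α x (w y)).comp y hw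

theorem pd2_pseudoPotential (hf : ContDiff ℝ 1 f) (hw : HasDerivAt w w₁ y) (α x : ℝ) :
    pd2 (pseudoPotential f w α) (x, y) = w₁ * ∫ t in α..x, pd2 f (t, w y - t) :=
  (hasDerivAt_pseudoPotential_snd hf hw α x).deriv

theorem pd2_pd2_pseudoPotential (hf : ContDiff ℝ 2 f)
    (hw : ∀ᶠ v in nhds y, HasDerivAt w (w' v) v) (hw' : HasDerivAt w' w₂ y) (α x : ℝ) :
    pd2 (pd2 (pseudoPotential f w α)) (x, y)
      = w₂ * (∫ t in α..x, pd2 f (t, w y - t))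
        + w' y ^ 2 * (pd2 f (α, w y - α) - pd2 f (x, w y - x)
          + (pd1 f (α, w y - α) - pd1 f (x, w y - x)
            + ∫ t in α..x, pd1 (pd1 f) (t, w y - t))) := by
  have hpd2 : (fun v => pd2 (pseudoPotential f w α) (x, v))
      =ᶠ[nhds y] fun v => w' v * pseudoPotential (pd2 f) w α (x, v) := by
    filter_upwards [hw] with v hv
    exact pd2_pseudoPotential (hf.of_le one_le_two) hv α x
  have hderiv := hw'.mul (hasDerivAt_pseudoPotential_snd
    (contDiff_pd2 hf one_add_one_eq_two.le) hw.self_of_nhds α x)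
  rw [← integral_pd2_pd2_antidiagonal hf, pow_two, mul_assoc]
  exact hpd2.deriv_eq.trans hderiv.deriv

end PseudoPotential

section LogOdds

variable {y : ℝ}

theorem hasDerivAt_log_div_one_sub (hy₀ : y ≠ 0) (hy₁ : 1 - y ≠ 0) :
    HasDerivAt (fun y => Real.log (y / (1 - y))) (1 / (y * (1 - y))) y := by
  refine (((hasDerivAt_id y).div ((hasDerivAt_id y).const_sub 1) hy₁).log
    (div_ne_zero hy₀ hy₁)).congr_deriv ?_
  simp only [Pi.div_apply, id_eq]
  field_simp
  ring

theorem hasDerivAt_one_div_mul_one_sub (hy₀ : y ≠ 0) (hy₁ : 1 - y ≠ 0) :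
    HasDerivAt (fun y => 1 / (y * (1 - y))) ((2 * y - 1) / (y ^ 2 * (1 - y) ^ 2)) y := by
  refine ((hasDerivAt_const y (1 : ℝ)).div ((hasDerivAt_id y).mul ((hasDerivAt_id y).const_sub 1))
    (mul_ne_zero hy₀ hy₁)).congr_deriv ?_
  simp only [Pi.mul_apply, id_eq]
  field_simp
  ring

end LogOdds

theorem statement12 (σ γ α : ℝ) (hσ : 0 < σ) (hγ : 0 < γ)
    (Uh : ℝ × ℝ → ℝ) (hUh : ContDiff ℝ 2 Uh)
    (V : ℝ × ℝ → ℝ)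
    (hV : ∀ x y : ℝ, V (x, y) = ∫ x' in α..x, Uh (x', zfun σ γ x' y)) :
    ∀ x : ℝ, ∀ y ∈ Set.Ioo (0 : ℝ) 1,
      pd1 V (x, y) = Uh (x, zfun σ γ x y)
      ∧ pd1 (pd1 V) (x, y) = pd1 Uh (x, zfun σ γ x y) - pd2 Uh (x, zfun σ γ x y)
      ∧ pd2 (pd1 V) (x, y) = pd2 Uh (x, zfun σ γ x y) * (σ / γ) * (1 / (y * (1 - y)))
      ∧ pd2 V (x, y)
          = (σ / γ) * (1 / (y * (1 - y))) * ∫ x' in α..x, pd2 Uh (x', zfun σ γ x' y)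
      ∧ pd2 (pd2 V) (x, y)
          = (σ / γ) * ((2 * y - 1) / (y ^ 2 * (1 - y) ^ 2))
              * (∫ x' in α..x, pd2 Uh (x', zfun σ γ x' y))
            + (σ ^ 2 / γ ^ 2) * (1 / (y ^ 2 * (1 - y) ^ 2))
              * (pd2 Uh (α, zfun σ γ α y) - pd2 Uh (x, zfun σ γ x y))
            + (σ ^ 2 / γ ^ 2) * (1 / (y ^ 2 * (1 - y) ^ 2))
              * (pd1 Uh (α, zfun σ γ α y) - pd1 Uh (x, zfun σ γ x y)
                  + ∫ x' in α..x, pd1 (pd1 Uh) (x', zfun σ γ x' y)) := by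
  intro x y hy
  let w : ℝ → ℝ := fun v => σ / γ * Real.log (v / (1 - v))
  have hw : ∀ v ∈ Set.Ioo (0 : ℝ) 1, HasDerivAt w (σ / γ * (1 / (v * (1 - v)))) v := fun v hv =>
    (hasDerivAt_log_div_one_sub hv.1.ne' (sub_pos.2 hv.2).ne').const_mul (σ / γ)
  have hw' : HasDerivAt (fun v => σ / γ * (1 / (v * (1 - v))))
      (σ / γ * ((2 * y - 1) / (y ^ 2 * (1 - y) ^ 2))) y :=
    (hasDerivAt_one_div_mul_one_sub hy.1.ne' (sub_pos.2 hy.2).ne').const_mul (σ / γ)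
  have hdiff : Differentiable ℝ Uh := hUh.differentiable two_ne_zero
  obtain rfl : V = pseudoPotential Uh w α := funext fun p => hV p.1 p.2
  refine ⟨congrFun (pd1_pseudoPotential hUh.continuous w α) (x, y),
    pd1_pd1_pseudoPotential hdiff w α x y,
    (pd2_pd1_pseudoPotential hdiff (hw y hy) α x).trans (mul_assoc _ _ _).symm,
    pd2_pseudoPotential (hUh.of_le one_le_two) (hw y hy) α x, ?_⟩
  have hw_nhds := Filter.eventually_of_mem (Ioo_mem_nhds hy.1 hy.2) hw
  refine (pd2_pd2_pseudoPotential hUh hw_nhds hw' α x).trans ?_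
  have hsq : (σ / γ * (1 / (y * (1 - y)))) ^ 2 = σ ^ 2 / γ ^ 2 * (1 / (y ^ 2 * (1 - y) ^ 2)) := by
    rw [mul_pow, div_pow, div_pow, one_pow, mul_pow]
  rw [hsq, mul_add (σ ^ 2 / γ ^ 2 * _), ← add_assoc]
  rfl
end
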